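/- arXiv:1704.02712 — 3 statements merged into one kernel-verified Lean document; each statement's English description precedes it below -/
import Mathlib

section
/- (Proposition 1.) Let α > 0, β > 0, τ > 0, let ψ, φ ∈ ℝᵖ, and set γ = 1 + (1 + αβτ²)/((α + β)τ). Suppose ζ_k, ζ̂_{k+1}, ζ_{k+1} ∈ ℝᵖ satisfy the relaxed Douglas–Rachford splitting steps for the linear subgradient model ∂ĥ(ζ) = αζ + ψ and ∂ĝ(ζ) = βζ + φ, namely 0 = (ζ̂_{k+1} − ζ_k)/τ + (α ζ̂_{k+1} + ψ) + (β ζ_k + φ) and 0 = (ζ_{k+1} − ζ_k)/τ + γ(α ζ̂_{k+1} + ψ) − (1 − γ)(β ζ_k + φ) + (β ζ_{k+1} + φ). Then the residual of the model objective at ζ_{k+1} is zero, i.e., (α ζ_{k+1} + ψ) + (β ζ_{k+1} + φ) = 0. -/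
/-!
Put `d = ζhat - ζk`, `e = ζk1 - ζk` and let `r = (α + β) ζk + ψ + φ` be the residual at `ζk`.
The two steps read `(1 + α τ) d = -τ r` and `(1 + β τ) e = γ d`, and the prescribed relaxation is
`γ = (1 + α τ) (1 + β τ) / ((α + β) τ)`. Hence `(α + β) e = -r`, so the residual at `ζk1`, which is
`r + (α + β) e`, vanishes. The computation is carried out coordinatewise.
-/

/-- Proposition 1: for the linear subgradient model, relaxed DRS with
`γ = 1 + (1 + αβτ²)/((α+β)τ)` achieves zero residual after one step. -/
theorem drs_linear_model_zero_residual {p : ℕ}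
    (α β τ γ : ℝ) (hα : 0 < α) (hβ : 0 < β) (hτ : 0 < τ)
    (hγ : γ = 1 + (1 + α * β * τ ^ 2) / ((α + β) * τ))
    (ψ φ ζk ζhat ζk1 : EuclideanSpace ℝ (Fin p))
    (h1 : 0 = (1 / τ) • (ζhat - ζk) + (α • ζhat + ψ) + (β • ζk + φ))
    (h2 : 0 = (1 / τ) • (ζk1 - ζk) + γ • (α • ζhat + ψ)
            - (1 - γ) • (β • ζk + φ) + (β • ζk1 + φ)) :
    (α • ζk1 + ψ) + (β • ζk1 + φ) = 0 := by
  have hs : 0 < α + β := add_pos hα hβ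
  -- This choice of `γ` makes the product of the two resolvent factors cancel.
  have hγ' : γ * ((α + β) * τ) = (1 + α * τ) * (1 + β * τ) := by
    rw [hγ]
    field_simp
    ring
  ext i
  have e1 := congrArg (fun v : EuclideanSpace ℝ (Fin p) => v i) h1
  have e2 := congrArg (fun v : EuclideanSpace ℝ (Fin p) => v i) h2
  simp only [PiLp.add_apply, PiLp.sub_apply, PiLp.smul_apply, PiLp.zero_apply,
    smul_eq_mul] at e1 e2 ⊢
  have k1 : (1 + α * τ) * (ζhat i - ζk i) + τ * ((α + β) * ζk i + ψ i + φ i) = 0 := by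
    field_simp at e1
    linear_combination -e1
  -- By the first step, `γ` times the sum of the two subgradients is `-γ (ζhat - ζk) / τ`.
  have k2 : (1 + β * τ) * (ζk1 i - ζk i) = γ * (ζhat i - ζk i) := by
    field_simp at e2
    linear_combination -e2 - γ * k1
  have hpos : (1 + β * τ) * τ ≠ 0 := by positivity
  apply mul_left_cancel₀ hpos
  linear_combination (α + β) * τ * k2 + (1 + β * τ) * k1 + (ζhat i - ζk i) * hγ'
end

section
/- Let C > 0 and let τ_k > 0 and γ_k be sequences (indexed by k ≥ 1) satisfying the safeguarded update bounds: 1 ≤ γ_k ≤ min(1 + C/k², 2 − δ) for some δ > 0, τ_{k+1} ≤ (1 + C/k²)·τ_k, and τ_k ≥ τ_min for some τ_min > 0. Then Assumption 1 holds: 1 ≤ γ_k < 2 for all k, the sequence 1/τ_k² is bounded, and ∑_k η_k² < ∞, where η_k² = (γ_k/(2−γ_k))·max(τ_k²/τ_{k−1}², 1) − 1. -/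
/-!
With `x = C / (k + 1) ^ 2 ≤ C`, the relaxation factor satisfies
`1 ≤ γ / (2 - γ) = 1 + 2 (γ - 1) / (2 - γ) ≤ 1 + (2 / δ) x` and the penalty factor satisfies
`1 ≤ max (τ' ^ 2 / τ ^ 2) 1 ≤ (1 + x) ^ 2 ≤ 1 + (2 + C) x`. Their product minus one is therefore
between `0` and a constant multiple of `x`, and the series converges by comparison with
`∑ 1 / (k + 1) ^ 2`.
-/

lemma relaxation_factor_bounds {g δ x : ℝ} (hδ : 0 < δ) (h1 : 1 ≤ g) (hx : g ≤ 1 + x)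
    (h2 : g ≤ 2 - δ) : 1 ≤ g / (2 - g) ∧ g / (2 - g) ≤ 1 + 2 / δ * x := by
  have hg : 0 < 2 - g := by linarith
  refine ⟨by rw [le_div_iff₀ hg]; linarith, ?_⟩
  have e : g / (2 - g) = 1 + 2 * (g - 1) / (2 - g) := by field_simp; ring
  have h : 2 * (g - 1) / (2 - g) ≤ 2 * x / δ :=
    div_le_div₀ (by linarith) (by linarith) hδ (by linarith)
  calc g / (2 - g) = 1 + 2 * (g - 1) / (2 - g) := e
    _ ≤ 1 + 2 * x / δ := by linarith
    _ = 1 + 2 / δ * x := by ring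

lemma penalty_factor_le {s t x C : ℝ} (hs : 0 < s) (ht : 0 < t) (hx : 0 ≤ x) (hxC : x ≤ C)
    (hst : t ≤ (1 + x) * s) : max (t ^ 2 / s ^ 2) 1 ≤ 1 + (2 + C) * x := by
  have hxx : x * x ≤ C * x := mul_le_mul_of_nonneg_right hxC hx
  refine max_le ?_ (by nlinarith)
  have h : t / s ≤ 1 + x := by rwa [div_le_iff₀ hs]
  have h' : (t / s) ^ 2 ≤ (1 + x) ^ 2 := pow_le_pow_left₀ (by positivity) h 2
  rw [← div_pow]
  nlinarith

/-- The safeguarded parameter updates of ARADMM satisfy Assumption 1. -/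
theorem safeguarded_updates_satisfy_assumption1
    (C : ℝ) (hC : 0 < C) (τ γ : ℕ → ℝ) (δ : ℝ) (hδ : 0 < δ)
    (τmin : ℝ) (hτmin : 0 < τmin)
    (hτpos : ∀ k, 1 ≤ k → 0 < τ k)
    (hγbound : ∀ k : ℕ, 1 ≤ k → 1 ≤ γ k ∧ γ k ≤ min (1 + C / (k : ℝ) ^ 2) (2 - δ))
    (hτstep : ∀ k : ℕ, 1 ≤ k → τ (k + 1) ≤ (1 + C / (k : ℝ) ^ 2) * τ k)
    (hτlow : ∀ k : ℕ, 1 ≤ k → τmin ≤ τ k) :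
    (∀ k, 1 ≤ k → 1 ≤ γ k ∧ γ k < 2) ∧
    (∃ M : ℝ, ∀ k, 1 ≤ k → 1 / (τ k) ^ 2 ≤ M) ∧
    Summable (fun k : ℕ =>
      γ (k + 2) / (2 - γ (k + 2)) * max ((τ (k + 2)) ^ 2 / (τ (k + 1)) ^ 2) 1 - 1) := by
  refine ⟨fun k hk => ?_, ⟨1 / τmin ^ 2, fun k hk => ?_⟩, ?_⟩
  · obtain ⟨h1, h2⟩ := hγbound k hk
    exact ⟨h1, by linarith [h2.trans (min_le_right _ _)]⟩
  · exact one_div_le_one_div_of_le (by positivity)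
      (pow_le_pow_left₀ hτmin.le (hτlow k hk) 2)
  · have hsum : Summable (fun k : ℕ => C / ((k + 1 : ℕ) : ℝ) ^ 2) := by
      have h := (Real.summable_one_div_nat_pow (p := 2)).2 one_lt_two
      have h' := ((summable_nat_add_iff 1).2 h).mul_left C
      simpa [div_eq_mul_inv] using h'
    have hb : ∀ k : ℕ,
        1 ≤ γ (k + 2) / (2 - γ (k + 2)) * max ((τ (k + 2)) ^ 2 / (τ (k + 1)) ^ 2) 1 ∧
        γ (k + 2) / (2 - γ (k + 2)) * max ((τ (k + 2)) ^ 2 / (τ (k + 1)) ^ 2) 1 - 1 ≤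
          (2 / δ + (2 + C) + 2 / δ * (2 + C) * C) * (C / ((k + 1 : ℕ) : ℝ) ^ 2) := by
      intro k
      obtain ⟨h1, h2⟩ := hγbound (k + 2) (by omega)
      have hk1 : (1 : ℝ) ≤ ((k + 1 : ℕ) : ℝ) := by exact_mod_cast Nat.succ_pos k
      have hk2 : ((k + 1 : ℕ) : ℝ) ≤ ((k + 2 : ℕ) : ℝ) := by exact_mod_cast Nat.le_succ _
      have hstep := hτstep (k + 1) (by omega)
      have hx0 : 0 ≤ C / ((k + 1 : ℕ) : ℝ) ^ 2 := by positivity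
      have hxC : C / ((k + 1 : ℕ) : ℝ) ^ 2 ≤ C := div_le_self hC.le (one_le_pow₀ hk1)
      have hmono : C / ((k + 2 : ℕ) : ℝ) ^ 2 ≤ C / ((k + 1 : ℕ) : ℝ) ^ 2 := by gcongr
      set x := C / ((k + 1 : ℕ) : ℝ) ^ 2
      obtain ⟨ha, hA⟩ := relaxation_factor_bounds (x := x) hδ h1
        (by linarith [h2.trans (min_le_left _ _)]) (h2.trans (min_le_right _ _))
      have hB := penalty_factor_le (hτpos (k + 1) (by omega)) (hτpos (k + 2) (by omega))
        hx0 hxC hstep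
      refine ⟨one_le_mul_of_one_le_of_one_le ha (le_max_right _ _), ?_⟩
      have hp := mul_le_mul hA hB (zero_le_one.trans (le_max_right _ _)) (by positivity)
      have hxx : 2 / δ * (2 + C) * (x * x) ≤ 2 / δ * (2 + C) * (C * x) := by gcongr
      linarith
    exact Summable.of_nonneg_of_le (fun k => sub_nonneg.2 (hb k).1) (fun k => (hb k).2)
      (hsum.mul_left _)
end

section
/- Let (s_k), (c_k), (η_k) be sequences of nonnegative real numbers such that ∑_k η_k < ∞ and c_k ≤ (1 + η_k)·s_k − s_{k+1} for all k ≥ 0. Then ∑_k c_k < ∞; in particular, c_k → 0 as k → ∞. -/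
/-!
By induction, `∑_{i<n} c_i + s_n ≤ (∏_{i<n} (1 + η_i)) s_0`: in the step, the left side grows to at
most `∑_{i<n} c_i + (1 + η_n) s_n ≤ (1 + η_n) (∑_{i<n} c_i + s_n)`. The products are bounded by
`exp (∑ η)`, so the partial sums of the nonnegative sequence `c` are bounded.
-/

/-- Abstract telescoping/contraction argument: if `∑ η_k < ∞` and
`c_k ≤ (1 + η_k) s_k - s_{k+1}` with all sequences nonnegative, then `∑ c_k < ∞`
and in particular `c_k → 0`. -/
theorem summable_of_perturbed_contraction (s c η : ℕ → ℝ)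
    (hs : ∀ k, 0 ≤ s k) (hc : ∀ k, 0 ≤ c k) (hη : ∀ k, 0 ≤ η k)
    (hηsum : Summable η)
    (hrec : ∀ k, c k ≤ (1 + η k) * s k - s (k + 1)) :
    Summable c ∧ Filter.Tendsto c Filter.atTop (nhds 0) := by
  have key : ∀ n, ∑ i ∈ Finset.range n, c i + s n ≤
      (∏ i ∈ Finset.range n, (1 + η i)) * s 0 := by
    intro n
    induction n with
    | zero => simp
    | succ n ih =>
      rw [Finset.sum_range_succ, Finset.prod_range_succ]
      have hsum : 0 ≤ ∑ i ∈ Finset.range n, c i := Finset.sum_nonneg fun i _ => hc i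
      have hmul := mul_le_mul_of_nonneg_left ih (add_nonneg zero_le_one (hη n))
      linarith [hrec n, mul_nonneg (hη n) hsum]
  have hprod : ∀ n, ∏ i ∈ Finset.range n, (1 + η i) ≤ Real.exp (∑' i, η i) := fun n =>
    (Real.prod_one_add_le_exp_sum _ hη).trans
      (Real.exp_le_exp.mpr (hηsum.sum_le_tsum _ fun i _ => hη i))
  have hsummable : Summable c :=
    summable_of_sum_range_le (c := Real.exp (∑' i, η i) * s 0) hc fun n => by
      linarith [key n, hs n, mul_le_mul_of_nonneg_right (hprod n) (hs 0)]
  exact ⟨hsummable, hsummable.tendsto_atTop_zero⟩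
end
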